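/- arXiv:2505.07434 — 9 statements merged into one kernel-verified Lean document; each statement's English description precedes it below -/
import Mathlib

section
/- Let p be an odd prime, k ≥ 1, and a, b, z integers with p ∤ a, a^z ≡ b (mod p). Let r be a positive integer with r ≤ k and p^r ∣ a^(p−1) − 1. If there exists a natural number x with a^x ≡ b (mod p^k), then a^z ≡ b (mod p^r). -/
/-!
Both `u = a ^ z` and `v = a ^ x` satisfy `u ^ (p - 1) ≡ 1 ≡ v ^ (p - 1)` modulo `p ^ r`, and they
agree modulo `p`. Since the exponent `p - 1` is prime to `p`, `u ^ (p - 1) - v ^ (p - 1)` and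
`u - v` have the same `p`-adic valuation (`emultiplicity_pow_sub_pow_of_prime`), so `p ^ r`
divides `u - v`.
-/

/-- Let p be an odd prime, k ≥ 1, a, b integers and z a natural number with p ∤ a,
a^z ≡ b (mod p). Let r ≥ 1 with r ≤ k and p^r ∣ a^(p−1) − 1. If there is a natural
number x with a^x ≡ b (mod p^k), then a^z ≡ b (mod p^r). -/
theorem no_solution_test_correct (p : ℕ) (hp : p.Prime) (hodd : p ≠ 2)
    (k : ℕ) (hk : 1 ≤ k) (a b : ℤ) (z : ℕ) (ha : ¬ (p : ℤ) ∣ a)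
    (hz : a ^ z ≡ b [ZMOD (p : ℤ)])
    (r : ℕ) (hr : 0 < r) (hrk : r ≤ k)
    (hdvd : (p : ℤ) ^ r ∣ a ^ (p - 1) - 1)
    (hsol : ∃ x : ℕ, a ^ x ≡ b [ZMOD (p : ℤ) ^ k]) :
    a ^ z ≡ b [ZMOD (p : ℤ) ^ r] := by
  obtain ⟨x, hx⟩ := hsol
  have hpz : Prime (p : ℤ) := Nat.prime_iff_prime_int.mp hp
  have hxr : a ^ x ≡ b [ZMOD (p : ℤ) ^ r] := hx.of_dvd (pow_dvd_pow _ hrk)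
  have hx1 : a ^ x ≡ b [ZMOD (p : ℤ)] := hx.of_dvd (dvd_pow_self _ (by omega))
  refine Int.ModEq.trans ?_ hxr
  have hp1 : (p : ℤ) ∣ a ^ z - a ^ x := (hx1.trans hz.symm).dvd
  have hu : ¬ (p : ℤ) ∣ a ^ z := fun h => ha (hpz.dvd_of_dvd_pow h)
  have hn : ¬ (p : ℤ) ∣ ((p - 1 : ℕ) : ℤ) := by
    intro h
    have h2 := hp.two_le
    have := Nat.le_of_dvd (by omega) (Int.natCast_dvd_natCast.mp h)
    omega
  have hone : ∀ n : ℕ, (a ^ n) ^ (p - 1) ≡ 1 [ZMOD (p : ℤ) ^ r] := by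
    intro n
    have h : a ^ (p - 1) ≡ 1 [ZMOD (p : ℤ) ^ r] := (Int.modEq_iff_dvd.mpr hdvd).symm
    rw [pow_right_comm]
    simpa using h.pow n
  have hd : (p : ℤ) ^ r ∣ (a ^ z) ^ (p - 1) - (a ^ x) ^ (p - 1) :=
    ((hone x).trans (hone z).symm).dvd
  rw [pow_dvd_iff_le_emultiplicity,
    emultiplicity_pow_sub_pow_of_prime hpz hp1 hu hn, ← pow_dvd_iff_le_emultiplicity] at hd
  exact (Int.modEq_iff_dvd.mpr hd).symm
end

section
/- Let p be an odd prime and a, b, z integers with p ∤ a and a^z ≡ b (mod p). Let r = ν_p(a^(p−1) − 1), assumed finite (i.e., a^(p−1) ≠ 1), and set h = (a^(p−1) − 1)/p^r. Then for all natural numbers j, y, d: a^((p−1)((d+1)p^j + y) + z) − a^((p−1)(d·p^j + y) + z) ≡ h·b·p^(r+j) (mod p^(r+j+1)). -/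
/-!
Put `A = a ^ (p - 1) = 1 + p ^ r * h`, where `r ≥ 1` by Fermat. For odd `p`, raising
`1 + p ^ s * u` (`s ≥ 1`) to the `p`-th power gives `1 + p ^ (s + 1) * u'` with
`u' ≡ u` mod `p`, so `A ^ p ^ j - 1 ≡ h * p ^ (r + j)` mod `p ^ (r + j + 1)`
(`exists_one_add_pow_odd_pow`). The difference in the theorem factors as
`A ^ (d * p ^ j + y) * a ^ z * (A ^ p ^ j - 1)`, and since the last factor is divisible by
`p ^ (r + j)`, the cofactor matters only mod `p`, where it is `1 * b`.
-/

/-- The odd-exponent step: the binomial terms of degree at least two are divisible by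
`n ^ (s + 3)`. -/
lemma exists_one_add_pow_odd {n : ℕ} (hn : Odd n) (s : ℕ) (u : ℤ) :
    ∃ k : ℤ, (1 + (n : ℤ) ^ (s + 1) * u) ^ n = 1 + (n : ℤ) ^ (s + 2) * (u + n * k) := by
  obtain ⟨c, hc⟩ := odd_sq_dvd_geom_sum₂_sub (R := ℤ) (a := 1) (b := (n : ℤ) ^ s * u) hn
  have hg := geom_sum₂_mul (1 + (n : ℤ) * ((n : ℤ) ^ s * u)) 1 n
  rw [sub_eq_iff_eq_add.mp hc, one_pow, one_pow] at hg
  refine ⟨c * u, ?_⟩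
  have hb : 1 + (n : ℤ) ^ (s + 1) * u = 1 + (n : ℤ) * ((n : ℤ) ^ s * u) := by ring
  rw [hb]
  linear_combination -hg

lemma exists_one_add_pow_odd_pow {n : ℕ} (hn : Odd n) (s : ℕ) (u : ℤ) (j : ℕ) :
    ∃ k : ℤ, (1 + (n : ℤ) ^ (s + 1) * u) ^ n ^ j =
      1 + (n : ℤ) ^ (s + 1 + j) * (u + n * k) := by
  induction j with
  | zero => exact ⟨0, by simp⟩
  | succ j ih =>
    obtain ⟨k, hk⟩ := ih
    obtain ⟨l, hl⟩ := exists_one_add_pow_odd hn (s + j) (u + n * k)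
    refine ⟨k + l, ?_⟩
    rw [pow_succ n j, pow_mul, hk, show s + 1 + j = s + j + 1 by ring, hl]
    ring

/-- Let p be an odd prime and a, b integers, z a natural number, with p ∤ a and
a^z ≡ b (mod p). Let r = ν_p(a^(p−1) − 1) (finite, i.e. a^(p−1) ≠ 1), expressed by
p^r ∣ a^(p−1) − 1 and p^(r+1) ∤ a^(p−1) − 1, and set h = (a^(p−1) − 1)/p^r.
Then for all j, y, d:
a^((p−1)((d+1)p^j + y) + z) − a^((p−1)(d·p^j + y) + z) ≡ h·b·p^(r+j) (mod p^(r+j+1)). -/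
theorem digit_increment_effect (p : ℕ) (hp : p.Prime) (hodd : p ≠ 2)
    (a b : ℤ) (z : ℕ) (ha : ¬ (p : ℤ) ∣ a) (hz : a ^ z ≡ b [ZMOD (p : ℤ)])
    (hne : a ^ (p - 1) ≠ 1) (r : ℕ)
    (hdvd : (p : ℤ) ^ r ∣ a ^ (p - 1) - 1)
    (hndvd : ¬ (p : ℤ) ^ (r + 1) ∣ a ^ (p - 1) - 1) :
    ∀ j y d : ℕ,
      a ^ ((p - 1) * ((d + 1) * p ^ j + y) + z) - a ^ ((p - 1) * (d * p ^ j + y) + z) ≡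
        ((a ^ (p - 1) - 1) / (p : ℤ) ^ r) * b * (p : ℤ) ^ (r + j)
        [ZMOD (p : ℤ) ^ (r + j + 1)] := by
  intro j y d
  have hodd' : Odd p := hp.odd_of_ne_two hodd
  have hpp : (p : ℤ) ≠ 0 := by exact_mod_cast hp.ne_zero
  have hfermat : a ^ (p - 1) ≡ 1 [ZMOD (p : ℤ)] :=
    Int.ModEq.pow_card_sub_one_eq_one hp
      ((Nat.prime_iff_prime_int.mp hp).coprime_iff_not_dvd.mpr ha).symm
  -- Fermat rules out `r = 0`.
  obtain ⟨s, rfl⟩ : ∃ s, r = s + 1 := by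
    refine Nat.exists_eq_succ_of_ne_zero ?_
    rintro rfl
    exact hndvd (by simpa using hfermat.symm.dvd)
  obtain ⟨h, hh⟩ := hdvd
  obtain ⟨k, hk⟩ := exists_one_add_pow_odd_pow hodd' s h j
  have hA : a ^ (p - 1) = 1 + (p : ℤ) ^ (s + 1) * h := by linear_combination hh
  have hcof : (a ^ (p - 1)) ^ (d * p ^ j + y) * a ^ z ≡ b [ZMOD (p : ℤ)] := by
    simpa using (hfermat.pow (d * p ^ j + y)).mul hz
  obtain ⟨c, hc⟩ := hcof.symm.dvd
  rw [hh, Int.mul_ediv_cancel_left _ (pow_ne_zero _ hpp)]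
  rw [← hA] at hk
  have hfac : a ^ ((p - 1) * ((d + 1) * p ^ j + y) + z) - a ^ ((p - 1) * (d * p ^ j + y) + z) =
      (a ^ (p - 1)) ^ (d * p ^ j + y) * a ^ z * ((a ^ (p - 1)) ^ p ^ j - 1) := by
    simp only [← pow_mul, mul_sub, ← pow_add, mul_one]
    congr 2
    ring
  rw [hfac, hk, sub_eq_iff_eq_add.mp hc]
  refine (Int.modEq_iff_dvd.mpr ⟨c * h + c * p * k + b * k, ?_⟩).symm
  ring
end

section
/- Let p be an odd prime and a, b, z integers with p ∤ a and a^z ≡ b (mod p). Let r = ν_p(a^(p−1) − 1), assumed finite, and set h = (a^(p−1) − 1)/p^r. Let j, y be natural numbers such that a^((p−1)y + z) ≡ b (mod p^(r+j)). Then there exists exactly one natural number d with 0 ≤ d < p such that a^((p−1)(y + d·p^j) + z) ≡ b (mod p^(r+j+1)); moreover this d satisfies d·h·b ≡ (b − a^((p−1)y+z))/p^(r+j) (mod p), where the displayed quotient is an integer since b ≡ a^((p−1)y+z) (mod p^(r+j)). -/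
/-!
Write `a ^ (p - 1) = 1 + p ^ r * h`, where `p ∤ h`, and `r ≥ 1` by Fermat. Raising
`1 + p ^ s * k` (with `s ≥ 1`, `p` odd) to the `p`-th power gives `1 + p ^ (s + 1) * k'` with
`k' ≡ k` mod `p` (`pow_prime_one_add`), so `a ^ ((p - 1) * p ^ j) = 1 + p ^ (r + j) * k` with
`k ≡ h` mod `p` (`pow_prime_pow_one_add`). Its `d`-th power is linear in `d` modulo
`p ^ (r + j + 1)`. Putting `b - a ^ ((p - 1) * y + z) = p ^ (r + j) * q`, the congruence for the
digit `d` is therefore equivalent to the linear congruence `d * h * b ≡ q` mod `p`, which has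
exactly one solution in `[0, p)` because `p ∤ h * b`.
-/

lemma exists_one_add_pow_eq (x : ℤ) (d : ℕ) : ∃ t : ℤ, (1 + x) ^ d = 1 + d * x + x ^ 2 * t := by
  induction d with
  | zero => exact ⟨0, by simp⟩
  | succ n ih =>
    obtain ⟨t, ht⟩ := ih
    exact ⟨n + t + x * t, by rw [pow_succ, ht]; push_cast; ring⟩

/-- The factorisation `(1 + x) ^ p - 1 = x * ∑ i < p, (1 + x) ^ i`, together with the fact that
the sum is `≡ p` mod `p ^ 2` when `p ∣ x` and `p` is odd. -/
lemma pow_prime_one_add (p : ℕ) (hodd : Odd p) (s : ℕ) (hs : 1 ≤ s) (k : ℤ) :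
    ∃ t : ℤ, (1 + (p : ℤ) ^ s * k) ^ p = 1 + (p : ℤ) ^ (s + 1) * (k + p * t) := by
  obtain ⟨s, rfl⟩ := Nat.exists_eq_add_of_le' hs
  obtain ⟨t, ht⟩ := odd_sq_dvd_geom_sum₂_sub (a := (1 : ℤ)) ((p : ℤ) ^ s * k) hodd
  have hgeom := geom_sum_mul (1 + (p : ℤ) * ((p : ℤ) ^ s * k)) p
  simp only [one_pow, mul_one] at ht
  rw [sub_eq_iff_eq_add.mp ht] at hgeom
  refine ⟨k * t, ?_⟩
  have hx : (p : ℤ) ^ (s + 1) * k = p * ((p : ℤ) ^ s * k) := by ring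
  rw [hx]
  linear_combination -hgeom

lemma pow_prime_pow_one_add (p : ℕ) (hodd : Odd p) (r : ℕ) (hr : 1 ≤ r) (h : ℤ) (j : ℕ) :
    ∃ t : ℤ, (1 + (p : ℤ) ^ r * h) ^ p ^ j = 1 + (p : ℤ) ^ (r + j) * (h + p * t) := by
  induction j with
  | zero => exact ⟨0, by simp⟩
  | succ n ih =>
    obtain ⟨t, ht⟩ := ih
    obtain ⟨u, hu⟩ := pow_prime_one_add p hodd (r + n) (by omega) (h + p * t)
    refine ⟨t + u, ?_⟩
    rw [pow_succ p n, pow_mul, ht, hu]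
    ring

/-- Let p be an odd prime, a, b integers, z a natural number, with p ∤ a and
a^z ≡ b (mod p). Let r = ν_p(a^(p−1) − 1) (finite), h = (a^(p−1) − 1)/p^r.
Let j, y be naturals with a^((p−1)y + z) ≡ b (mod p^(r+j)). Then there is exactly
one natural number d < p with a^((p−1)(y + d·p^j) + z) ≡ b (mod p^(r+j+1));
moreover this d satisfies d·h·b ≡ (b − a^((p−1)y+z))/p^(r+j) (mod p). -/
theorem next_digit_exists_unique (p : ℕ) (hp : p.Prime) (hodd : p ≠ 2)
    (a b : ℤ) (z : ℕ) (ha : ¬ (p : ℤ) ∣ a) (hz : a ^ z ≡ b [ZMOD (p : ℤ)])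
    (hne : a ^ (p - 1) ≠ 1) (r : ℕ)
    (hdvd : (p : ℤ) ^ r ∣ a ^ (p - 1) - 1)
    (hndvd : ¬ (p : ℤ) ^ (r + 1) ∣ a ^ (p - 1) - 1)
    (j y : ℕ) (hy : a ^ ((p - 1) * y + z) ≡ b [ZMOD (p : ℤ) ^ (r + j)]) :
    (∃! d : ℕ, d < p ∧
        a ^ ((p - 1) * (y + d * p ^ j) + z) ≡ b [ZMOD (p : ℤ) ^ (r + j + 1)]) ∧
    ∀ d : ℕ, d < p →
      a ^ ((p - 1) * (y + d * p ^ j) + z) ≡ b [ZMOD (p : ℤ) ^ (r + j + 1)] →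
      (d : ℤ) * ((a ^ (p - 1) - 1) / (p : ℤ) ^ r) * b ≡
        (b - a ^ ((p - 1) * y + z)) / (p : ℤ) ^ (r + j) [ZMOD (p : ℤ)] := by
  have hpp : Prime (p : ℤ) := Nat.prime_iff_prime_int.mp hp
  have hp0 : (p : ℤ) ≠ 0 := hpp.ne_zero
  have hr : 1 ≤ r := by
    by_contra hr
    obtain rfl : r = 0 := by omega
    have hfermat := (Int.ModEq.pow_card_sub_one_eq_one hp
      ((Prime.coprime_iff_not_dvd hpp).mpr ha).symm).symm.dvd
    exact hndvd (by simpa using hfermat)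
  obtain ⟨h, hh⟩ := hdvd
  have hph : ¬ (p : ℤ) ∣ h := by
    rintro ⟨u, rfl⟩
    exact hndvd ⟨u, by rw [hh]; ring⟩
  have hpb : ¬ (p : ℤ) ∣ b := fun hb =>
    ha (hpp.dvd_of_dvd_pow ((Int.ModEq.dvd_iff hz).mpr hb))
  obtain ⟨q, hq⟩ := hy.dvd
  have hdiv1 : (a ^ (p - 1) - 1) / (p : ℤ) ^ r = h := by
    rw [hh, Int.mul_ediv_cancel_left _ (pow_ne_zero _ hp0)]
  have hdiv2 : (b - a ^ ((p - 1) * y + z)) / (p : ℤ) ^ (r + j) = q := by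
    rw [hq, Int.mul_ediv_cancel_left _ (pow_ne_zero _ hp0)]
  rw [hdiv1, hdiv2]
  obtain ⟨t, ht⟩ := pow_prime_pow_one_add p (hp.odd_of_ne_two hodd) r hr h j
  have key : ∀ d : ℕ, a ^ ((p - 1) * (y + d * p ^ j) + z) ≡ b [ZMOD (p : ℤ) ^ (r + j + 1)] ↔
      (d : ℤ) * h * b ≡ q [ZMOD (p : ℤ)] := by
    intro d
    obtain ⟨u, hu⟩ := exists_one_add_pow_eq ((p : ℤ) ^ (r + j) * (h + p * t)) d
    have hA : a ^ ((p - 1) * (y + d * p ^ j) + z) =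
        a ^ ((p - 1) * y + z) * ((1 + (p : ℤ) ^ r * h) ^ p ^ j) ^ d := by
      rw [← hh, add_sub_cancel, ← pow_mul, ← pow_mul, ← pow_add]
      congr 1
      ring
    rw [hA, ht, hu]
    obtain ⟨s, hs⟩ : ∃ s, r + j = s + 1 := ⟨r + j - 1, by omega⟩
    rw [hs] at hq ⊢
    have hc : a ^ ((p - 1) * y + z) = b - (p : ℤ) ^ (s + 1) * q := by
      linear_combination -hq
    -- Up to a multiple of `p ^ (s + 2)`, the difference of the two sides is
    -- `p ^ (s + 1) * (q - d * h * b)`.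
    obtain ⟨w, hw⟩ : ∃ w : ℤ, b - a ^ ((p - 1) * y + z) * (1 + d * ((p : ℤ) ^ (s + 1) *
        (h + p * t)) + ((p : ℤ) ^ (s + 1) * (h + p * t)) ^ 2 * u) =
        (p : ℤ) ^ (s + 1) * (q - d * h * b + p * w) := by
      refine ⟨-d * t * b + (p : ℤ) ^ s * q * d * (h + p * t) -
        (b - (p : ℤ) ^ (s + 1) * q) * (p : ℤ) ^ s * (h + p * t) ^ 2 * u, ?_⟩
      rw [hc]
      ring
    rw [Int.modEq_iff_dvd, Int.modEq_iff_dvd, hw, pow_succ _ (s + 1),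
      mul_dvd_mul_iff_left (pow_ne_zero _ hp0), dvd_add_left (dvd_mul_right _ _)]
  refine ⟨?_, fun d _ hd => (key d).mp hd⟩
  simp only [key]
  have hcop : IsCoprime (h * b) (p : ℤ) :=
    ((Prime.coprime_iff_not_dvd hpp).mpr (fun H => (hpp.dvd_or_dvd H).elim hph hpb)).symm
  obtain ⟨m, n, hmn⟩ := hcop
  have hppos : (0 : ℤ) < p := by exact_mod_cast hp.pos
  have hnn : 0 ≤ (q * m) % (p : ℤ) := Int.emod_nonneg _ hp0
  refine ⟨((q * m) % (p : ℤ)).toNat, ⟨?_, ?_⟩, ?_⟩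
  · have := Int.emod_lt_of_pos (q * m) hppos
    omega
  · rw [Int.toNat_of_nonneg hnn, mul_assoc]
    refine ((Int.mod_modEq (q * m) p).mul_right (h * b)).trans ?_
    rw [Int.modEq_iff_dvd]
    exact ⟨q * n, by linear_combination (-q) * hmn⟩
  · rintro d ⟨hd, hdq⟩
    have h1 : (d : ℤ) ≡ q * m [ZMOD (p : ℤ)] := by
      refine Int.ModEq.trans ?_ (hdq.mul_right m)
      rw [Int.modEq_iff_dvd]
      exact ⟨-d * n, by linear_combination (d : ℤ) * hmn⟩
    have h2 : (d : ℤ) % p = d := Int.emod_eq_of_lt (by positivity) (by exact_mod_cast hd)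
    have h3 : (d : ℤ) = (q * m) % p := h2.symm.trans h1
    omega
end

section
/- Let p be an odd prime, k ≥ 1, and a, b, z integers with p ∤ a and a^z ≡ b (mod p). Let r be a positive integer with r ≤ k, p^r ∣ a^(p−1) − 1, and such that either r = k or p^(r+1) ∤ a^(p−1) − 1 (i.e., r = min(ν_p(a^(p−1)−1), k)). If a^z ≡ b (mod p^r), then there exists exactly one natural number y with 0 ≤ y < p^(k−r) such that a^((p−1)y + z) ≡ b (mod p^k). -/
/-!
Put `g = a ^ (p - 1)` and `c = a ^ z`. If `r = k`, the only candidate is `y = 0`. Otherwise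
`p` divides `g - 1` exactly `r` times, and lifting the exponent gives
`p ^ (r + m) ∣ g ^ n - 1 ↔ p ^ m ∣ n` (`pow_dvd_pow_sub_one_iff`).

Uniqueness: two solutions `y₁ ≤ y₂` satisfy `p ^ k ∣ g ^ (y₂ - y₁) - 1`, so
`p ^ (k - r) ∣ y₂ - y₁`. Existence (`exists_lift`) is a Hensel-type induction on the exponent:
`g ^ (p ^ m) = 1 + p ^ (r + m) * u` with `p ∤ u`, so multiplying a solution modulo `p ^ (r + m)`
by a suitable power of `g ^ (p ^ m)` corrects the next `p`-adic digit.
-/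

theorem pow_dvd_pow_sub_one_iff {p : ℕ} (hp : p.Prime) (hodd : p ≠ 2) {g : ℤ} {r : ℕ}
    (hr : 0 < r) (h1 : (p : ℤ) ^ r ∣ g - 1) (h2 : ¬ (p : ℤ) ^ (r + 1) ∣ g - 1) (m n : ℕ) :
    (p : ℤ) ^ (r + m) ∣ g ^ n - 1 ↔ p ^ m ∣ n := by
  have hpg : (p : ℤ) ∣ g - 1 := (dvd_pow_self _ hr.ne').trans h1
  have hg : ¬ (p : ℤ) ∣ g := by
    intro h
    have h3 : (p : ℤ) ∣ 1 := by simpa using dvd_sub h hpg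
    exact (Nat.prime_iff_prime_int.mp hp).not_isUnit (isUnit_of_dvd_one h3)
  have key := Int.emultiplicity_pow_sub_pow hp (hp.odd_of_ne_two hodd) hpg hg n
  rw [one_pow, emultiplicity_eq_coe.mpr ⟨h1, h2⟩] at key
  rw [pow_dvd_iff_le_emultiplicity, pow_dvd_iff_le_emultiplicity, key, Nat.cast_add]
  exact ENat.add_le_add_iff_left (ENat.natCast_ne_top r)

theorem one_add_pow_modEq (x : ℤ) (j : ℕ) : (1 + x) ^ j ≡ 1 + j * x [ZMOD x * x] := by
  induction j with
  | zero => simp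
  | succ j ih =>
    rw [pow_succ]
    refine (ih.mul_right _).trans ?_
    refine (Int.modEq_iff_dvd.mpr ⟨-j, ?_⟩)
    push_cast
    ring

theorem exists_lift {p : ℕ} (hp : p.Prime) (hodd : p ≠ 2) {g b c : ℤ} {r : ℕ}
    (hr : 0 < r) (h1 : (p : ℤ) ^ r ∣ g - 1) (h2 : ¬ (p : ℤ) ^ (r + 1) ∣ g - 1)
    (hb : ¬ (p : ℤ) ∣ b) (hc : c ≡ b [ZMOD (p : ℤ) ^ r]) (m : ℕ) :
    ∃ y : ℕ, g ^ y * c ≡ b [ZMOD (p : ℤ) ^ (r + m)] := by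
  induction m with
  | zero => exact ⟨0, by simpa using hc⟩
  | succ m ih =>
    obtain ⟨y, hy⟩ := ih
    have hpp := Nat.prime_iff_prime_int.mp hp
    obtain ⟨t, ht⟩ := hy.symm.dvd
    obtain ⟨u, hu⟩ := (pow_dvd_pow_sub_one_iff hp hodd hr h1 h2 m (p ^ m)).mpr dvd_rfl
    have hpu : ¬ (p : ℤ) ∣ u := by
      rintro ⟨v, rfl⟩
      have h3 := (pow_dvd_pow_sub_one_iff hp hodd hr h1 h2 (m + 1) (p ^ m)).mp
        ⟨v, by rw [hu]; ring⟩
      have := (Nat.pow_dvd_pow_iff_le_right hp.one_lt).mp h3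
      omega
    -- The digit `j` solves `t + j * u * b ≡ 0` modulo `p`.
    have hj : ∃ j : ℕ, (p : ℤ) ∣ t + j * u * b := by
      have : Fact p.Prime := ⟨hp⟩
      have hub : ((u * b : ℤ) : ZMod p) ≠ 0 := by
        rw [Ne, ZMod.intCast_zmod_eq_zero_iff_dvd]
        exact fun h => (hpp.dvd_or_dvd h).elim hpu hb
      refine ⟨(-(t : ZMod p) / ((u * b : ℤ) : ZMod p)).val, ?_⟩
      rw [← ZMod.intCast_zmod_eq_zero_iff_dvd]
      push_cast at hub ⊢
      rw [ZMod.natCast_zmod_val, mul_assoc, div_mul_cancel₀ _ hub, add_neg_cancel]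
    obtain ⟨j, s, hs⟩ := hj
    refine ⟨y + p ^ m * j, ?_⟩
    obtain ⟨w, hw⟩ := (one_add_pow_modEq ((p : ℤ) ^ (r + m) * u) j).symm.dvd
    obtain ⟨q, hq⟩ : (p : ℤ) ∣ (p : ℤ) ^ (r + m) := dvd_pow_self _ (by omega)
    rw [pow_add g, pow_mul, show g ^ p ^ m = 1 + (p : ℤ) ^ (r + m) * u by rw [← hu]; ring,
      ← add_assoc r m 1, pow_succ _ (r + m)]
    symm
    rw [Int.modEq_iff_dvd]
    generalize (p : ℤ) ^ (r + m) = P at *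
    generalize (1 + P * u) ^ j = E at *
    have hE : E = 1 + j * (P * u) + P * u * (P * u) * w := by linarith
    have hgc : g ^ y * c = b + P * t := by linarith
    refine ⟨s + q * (t * j * u + u * u * w * (b + P * t)), ?_⟩
    have e1 : g ^ y * E * c - b
        = P * (t + j * u * b) + P * P * (t * j * u + u * u * w * (b + P * t)) := by
      calc g ^ y * E * c - b = (g ^ y * c) * E - b := by ring
        _ = _ := by rw [hgc, hE]; ring
    rw [e1, hs]
    linear_combination P * (t * j * u + u * u * w * (b + P * t)) * hq

/-- Let p be an odd prime, k ≥ 1, a, b integers and z a natural number with p ∤ a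
and a^z ≡ b (mod p). Let r be a positive integer with r ≤ k, p^r ∣ a^(p−1) − 1, and
either r = k or p^(r+1) ∤ a^(p−1) − 1. If a^z ≡ b (mod p^r), then there exists
exactly one natural number y with y < p^(k−r) such that a^((p−1)y + z) ≡ b (mod p^k). -/
theorem lift_exists_unique (p : ℕ) (hp : p.Prime) (hodd : p ≠ 2)
    (k : ℕ) (hk : 1 ≤ k) (a b : ℤ) (z : ℕ) (ha : ¬ (p : ℤ) ∣ a)
    (hz : a ^ z ≡ b [ZMOD (p : ℤ)])
    (r : ℕ) (hr : 0 < r) (hrk : r ≤ k)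
    (hdvd : (p : ℤ) ^ r ∣ a ^ (p - 1) - 1)
    (hmin : r = k ∨ ¬ (p : ℤ) ^ (r + 1) ∣ a ^ (p - 1) - 1)
    (hzr : a ^ z ≡ b [ZMOD (p : ℤ) ^ r]) :
    ∃! y : ℕ, y < p ^ (k - r) ∧ a ^ ((p - 1) * y + z) ≡ b [ZMOD (p : ℤ) ^ k] := by
  have hpp := Nat.prime_iff_prime_int.mp hp
  simp only [pow_add, pow_mul]
  rcases hmin with rfl | hmin
  · refine ⟨0, by simpa using hzr, ?_⟩
    rintro y ⟨hy, -⟩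
    simpa using hy
  have hac : ¬ (p : ℤ) ∣ a ^ z := fun h => ha (hpp.dvd_of_dvd_pow h)
  have hb : ¬ (p : ℤ) ∣ b := fun h => hac (hz.dvd_iff.mpr h)
  obtain ⟨m, rfl⟩ := Nat.exists_eq_add_of_le hrk
  rw [Nat.add_sub_cancel_left]
  have key := pow_dvd_pow_sub_one_iff hp hodd hr hdvd hmin m
  obtain ⟨y, hy⟩ := exists_lift hp hodd hr hdvd hmin hb hzr m
  generalize a ^ (p - 1) = g at *
  refine ⟨y % p ^ m, ⟨Nat.mod_lt _ (pow_pos hp.pos m), ?_⟩, ?_⟩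
  · have h1 : g ^ (p ^ m * (y / p ^ m)) ≡ 1 [ZMOD (p : ℤ) ^ (r + m)] :=
      (Int.modEq_iff_dvd.mpr ((key _).mpr (dvd_mul_right _ _))).symm
    have h2 := (h1.mul_left (g ^ (y % p ^ m))).mul_right (a ^ z)
    rw [← pow_add, Nat.mod_add_div, mul_one] at h2
    exact h2.symm.trans hy
  -- Solutions are congruent modulo `p ^ m`: cancel the unit `g ^ y₁ * a ^ z` and apply `key`.
  have uniq : ∀ y₁ y₂ : ℕ, y₁ ≤ y₂ → g ^ y₁ * a ^ z ≡ b [ZMOD (p : ℤ) ^ (r + m)] →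
      g ^ y₂ * a ^ z ≡ b [ZMOD (p : ℤ) ^ (r + m)] → y₁ ≡ y₂ [MOD p ^ m] := by
    intro y₁ y₂ hle e₁ e₂
    rw [Nat.modEq_iff_dvd' hle, ← key]
    have hn : ¬ (p : ℤ) ∣ g ^ y₁ * a ^ z := fun h =>
      hb ((e₁.of_dvd (dvd_pow_self _ (by omega))).dvd_iff.mp h)
    have hcop : IsCoprime ((p : ℤ) ^ (r + m)) (g ^ y₁ * a ^ z) :=
      ((Prime.coprime_iff_not_dvd hpp).mpr hn).pow_left
    refine hcop.dvd_of_dvd_mul_left ?_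
    have h3 := (e₁.trans e₂.symm).dvd
    rw [← Nat.add_sub_cancel' hle, pow_add g] at h3
    rwa [show g ^ y₁ * a ^ z * (g ^ (y₂ - y₁) - 1)
      = g ^ y₁ * g ^ (y₂ - y₁) * a ^ z - g ^ y₁ * a ^ z by ring]
  rintro x ⟨hx, hxb⟩
  have hxy : x ≡ y [MOD p ^ m] := by
    rcases le_total x y with h | h
    · exact uniq x y h hxb hy
    · exact (uniq y x h hy hxb).symm
  rw [← hxy, Nat.mod_eq_of_lt hx]
end

section
/- Let p be a prime and let e, s, k, d be natural numbers such that e ≡ 1 (mod p^s) and 3s ≥ k. Then e^d ≡ 1 + (e − 1)·(d + (e − 1)·(d(d−1)/2)) (mod p^k), where d(d−1)/2 is an integer. -/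
/-!
Write `e = x + 1` with `p ^ s ∣ x`. The binomial expansion of `(x + 1) ^ d` agrees with
`1 + d x + (d choose 2) x ^ 2` up to a multiple of `x ^ 3` (`exists_add_one_pow_eq`), and
`p ^ k ∣ p ^ (3 s) ∣ x ^ 3`.
-/

/-- The binomial expansion of `(x + 1) ^ d`, truncated after the quadratic term. -/
lemma exists_add_one_pow_eq (x d : ℕ) :
    ∃ q, (x + 1) ^ d = 1 + x * (d + x * d.choose 2) + x ^ 3 * q := by
  induction d with
  | zero => exact ⟨0, by simp⟩
  | succ d ih =>
    obtain ⟨q, hq⟩ := ih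
    refine ⟨d.choose 2 + q * (x + 1), ?_⟩
    have hc : (d + 1).choose 2 = d + d.choose 2 := by
      rw [Nat.choose_succ_succ' d 1, Nat.choose_one_right]
    rw [pow_succ, hq, hc]
    ring

/-- Let p be a prime and e, s, k, d natural numbers with e ≡ 1 (mod p^s) and
3s ≥ k. Then e^d ≡ 1 + (e − 1)·(d + (e − 1)·(d(d−1)/2)) (mod p^k). -/
theorem pow_congr_two_thirds_opt (p : ℕ) (hp : p.Prime) (e s k d : ℕ)
    (he : e ≡ 1 [MOD p ^ s]) (hs : 3 * s ≥ k) :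
    e ^ d ≡ 1 + (e - 1) * (d + (e - 1) * (d * (d - 1) / 2)) [MOD p ^ k] := by
  rcases e with _ | x
  · -- Here `e - 1` truncates to `0`, but `p ^ s ∣ 1` forces `s = k = 0`, so the modulus is `1`.
    have h1 : p ^ s ∣ 1 := (Nat.modEq_zero_iff_dvd).1 he.symm
    have hs0 : s = 0 := by
      by_contra h
      exact hp.one_lt.ne' (Nat.dvd_one.1 ((dvd_pow_self p h).trans h1))
    obtain rfl : k = 0 := by omega
    rw [pow_zero]
    exact Nat.modEq_one
  · have hx : p ^ s ∣ x := by
      simpa using (Nat.modEq_iff_dvd' (Nat.le_add_left 1 x)).1 he.symm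
    have hx3 : p ^ k ∣ x ^ 3 := by
      refine (pow_dvd_pow p hs).trans ?_
      rw [mul_comm, pow_mul]
      exact pow_dvd_pow_of_dvd hx 3
    obtain ⟨q, hq⟩ := exists_add_one_pow_eq x d
    rw [Nat.add_sub_cancel, ← Nat.choose_two_right, hq]
    simpa using ((Nat.modEq_zero_iff_dvd).2 (hx3.mul_right q)).add_left
      (1 + x * (d + x * d.choose 2))
end

section
/- Let a and b be odd integers with a² ≠ 1, let r = ν_2(a² − 1), and let j, y be natural numbers. Then a^(2^(j+1) + y) − a^y ≡ 2^(r+j) (mod 2^(r+j+1)). -/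
/-!
The power `a ^ 2 ^ (j + 1)` equals `1 + 2 ^ (r + j) * m` with `m` odd
(`exists_odd_pow_two_pow_sub_one`). This goes by induction on `j`: with `x = a ^ 2 ^ (j + 1)`,
`x ^ 2 - 1 = (x - 1) * (x + 1)`, and `x + 1` is twice an odd number because `x` is an odd square,
so each squaring raises the 2-adic valuation by exactly one. Multiplying by the odd number `a ^ y`
then gives `2 ^ (r + j)` times an odd number, which is `2 ^ (r + j)` modulo `2 ^ (r + j + 1)`.
-/

theorem exists_odd_pow_two_pow_sub_one {a : ℤ} (ha : Odd a) {r : ℕ}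
    (hdvd : (2 : ℤ) ^ r ∣ a ^ 2 - 1) (hndvd : ¬ (2 : ℤ) ^ (r + 1) ∣ a ^ 2 - 1) (j : ℕ) :
    ∃ m : ℤ, Odd m ∧ a ^ 2 ^ (j + 1) - 1 = 2 ^ (r + j) * m := by
  induction j with
  | zero =>
    obtain ⟨m, hm⟩ := hdvd
    refine ⟨m, ?_, by simpa using hm⟩
    by_contra h
    obtain ⟨k, hk⟩ := Int.not_odd_iff_even.mp h
    exact hndvd ⟨k, by rw [hm, hk]; ring⟩
  | succ j ih =>
    obtain ⟨m, hmo, hm⟩ := ih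
    obtain ⟨q, hq⟩ := Int.eight_dvd_sq_sub_one_of_odd (ha.pow (n := 2 ^ j))
    have hx : a ^ 2 ^ (j + 1) = (a ^ 2 ^ j) ^ 2 := by rw [← pow_mul, ← pow_succ]
    -- `x = 1 + 8 * q`, so `x + 1 = 2 * (1 + 4 * q)`.
    refine ⟨m * (1 + 4 * q), hmo.mul ⟨2 * q, by ring⟩, ?_⟩
    have hx1 : a ^ 2 ^ (j + 1) + 1 = 2 * (1 + 4 * q) := by rw [hx]; linarith
    calc a ^ 2 ^ (j + 1 + 1) - 1 = (a ^ 2 ^ (j + 1) - 1) * (a ^ 2 ^ (j + 1) + 1) := by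
          rw [pow_succ 2 (j + 1), pow_mul]; ring
      _ = 2 ^ (r + (j + 1)) * (m * (1 + 4 * q)) := by rw [hm, hx1]; ring

/-- Let a and b be odd integers with a² ≠ 1, let r = ν_2(a² − 1) (expressed by the
divisibility characterization), and let j, y be natural numbers.
Then a^(2^(j+1) + y) − a^y ≡ 2^(r+j) (mod 2^(r+j+1)). -/
theorem bit_flip_effect (a b : ℤ) (ha : Odd a) (hb : Odd b) (hne : a ^ 2 ≠ 1)
    (r : ℕ) (hdvd : (2 : ℤ) ^ r ∣ a ^ 2 - 1)
    (hndvd : ¬ (2 : ℤ) ^ (r + 1) ∣ a ^ 2 - 1) :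
    ∀ j y : ℕ,
      a ^ (2 ^ (j + 1) + y) - a ^ y ≡ (2 : ℤ) ^ (r + j)
        [ZMOD (2 : ℤ) ^ (r + j + 1)] := by
  intro j y
  obtain ⟨m, hmo, hm⟩ := exists_odd_pow_two_pow_sub_one ha hdvd hndvd j
  obtain ⟨k, hk⟩ := hmo.mul (ha.pow (n := y))
  refine (Int.modEq_iff_dvd.mpr ⟨k, ?_⟩).symm
  calc a ^ (2 ^ (j + 1) + y) - a ^ y - 2 ^ (r + j)
      = (a ^ 2 ^ (j + 1) - 1) * a ^ y - 2 ^ (r + j) := by rw [pow_add]; ring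
    _ = 2 ^ (r + j) * (m * a ^ y) - 2 ^ (r + j) := by rw [hm]; ring
    _ = 2 ^ (r + j + 1) * k := by rw [hk]; ring
end

section
/- Let a be an odd integer, k ≥ 1, and let r be a positive integer with r ≤ k and 2^r ∣ a² − 1. If there exists a natural number x with a^x ≡ b (mod 2^k) for an integer b, then b ≡ 1 (mod 2^r) or b ≡ a (mod 2^r). -/
/-- Let a be an odd integer, k ≥ 1, and r a positive integer with r ≤ k and
2^r ∣ a² − 1. If there exists a natural number x with a^x ≡ b (mod 2^k) for an
integer b, then b ≡ 1 (mod 2^r) or b ≡ a (mod 2^r). -/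
theorem no_solution_test_correct_two (a b : ℤ) (ha : Odd a)
    (k : ℕ) (hk : 1 ≤ k) (r : ℕ) (hr : 0 < r) (hrk : r ≤ k)
    (hdvd : (2 : ℤ) ^ r ∣ a ^ 2 - 1)
    (hsol : ∃ x : ℕ, a ^ x ≡ b [ZMOD (2 : ℤ) ^ k]) :
    b ≡ 1 [ZMOD (2 : ℤ) ^ r] ∨ b ≡ a [ZMOD (2 : ℤ) ^ r] := by
  obtain ⟨x, hx⟩ := hsol
  have hb : b ≡ a ^ x [ZMOD (2 : ℤ) ^ r] := (hx.of_dvd (pow_dvd_pow 2 hrk)).symm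
  have hsq : a ^ 2 ≡ 1 [ZMOD (2 : ℤ) ^ r] := (Int.modEq_iff_dvd.mpr hdvd).symm
  -- Since `a ^ 2 ≡ 1`, the residue of `a ^ x` modulo `2 ^ r` depends only on the parity of `x`.
  have heven (m : ℕ) : a ^ (2 * m) ≡ 1 [ZMOD (2 : ℤ) ^ r] := by
    simpa [pow_mul] using hsq.pow m
  rcases Nat.even_or_odd' x with ⟨m, rfl | rfl⟩
  · exact Or.inl (hb.trans (heven m))
  · right
    rw [pow_succ] at hb
    simpa using hb.trans ((heven m).mul_right a)
end

section
/- Let a and b be odd integers, k ≥ 1, and let r be a positive integer with r ≤ k, 2^r ∣ a² − 1, and such that either r = k or 2^(r+1) ∤ a² − 1 (i.e., r = min(ν_2(a²−1), k)). Let y₀ ∈ {0, 1} be such that a^(y₀) ≡ b (mod 2^r). Then there exists exactly one natural number y with 0 ≤ y < 2^(k−r+1) and y ≡ y₀ (mod 2) such that a^y ≡ b (mod 2^k). -/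
/-!
Writing `y = y₀ + 2 z`, the claim is that `a ^ y₀ * c ^ z ≡ b (mod 2 ^ k)` with `c = a ^ 2` has a
unique solution `z < 2 ^ (k - r)`. If `r = k`, the only candidate is `z = 0`. Otherwise
`c = 1 + 2 ^ r * m` with `m` odd, and `r ≥ 2` because `8 ∣ a ^ 2 - 1`; squaring repeatedly gives
`c ^ 2 ^ n = 1 + 2 ^ (r + n) * (odd)` (`pow_two_pow_eq`). Hence one more binary digit of `z` is
determined by each passage from the modulus `2 ^ (r + n)` to `2 ^ (r + n + 1)`
(`existsUnique_mul_pow_modEq`).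
-/

lemma pow_two_pow_eq (c : ℤ) (r : ℕ) (hr : 2 ≤ r) (hc : ∃ m, Odd m ∧ c = 1 + 2 ^ r * m) (n : ℕ) :
    ∃ m, Odd m ∧ c ^ 2 ^ n = 1 + 2 ^ (r + n) * m := by
  induction n with
  | zero => simpa using hc
  | succ n ih =>
    obtain ⟨m, hm, h⟩ := ih
    obtain ⟨s, rfl⟩ := Nat.exists_eq_add_of_le hr
    refine ⟨m + 2 * (2 ^ (s + n) * m ^ 2), hm.add_even (even_two_mul _), ?_⟩
    rw [pow_succ 2 n, pow_mul, h]
    ring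

/-- Unique solvability by lifting one binary digit of the exponent at a time. The hypothesis on `c`
is only required for `n ≠ 0`, so that the case `n = 0` covers a modulus `2 ^ r` with no constraint
on `c`. -/
lemma existsUnique_mul_pow_modEq (c u b : ℤ) (hu : Odd u) (r : ℕ) (hub : u ≡ b [ZMOD 2 ^ r])
    (n : ℕ) (hc : n ≠ 0 → 2 ≤ r ∧ ∃ m, Odd m ∧ c = 1 + 2 ^ r * m) :
    ∃! z : ℕ, z < 2 ^ n ∧ u * c ^ z ≡ b [ZMOD 2 ^ (r + n)] := by
  induction n with
  | zero =>
    refine ⟨0, ⟨by simp, by simpa using hub⟩, ?_⟩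
    rintro z ⟨hz, -⟩
    simpa using hz
  | succ n ih =>
    obtain ⟨hr, hc'⟩ := hc (by simp)
    obtain ⟨z, ⟨hz, hzb⟩, huniq⟩ := ih (fun _ => ⟨hr, hc'⟩)
    obtain ⟨m, hm, hpow⟩ := pow_two_pow_eq c r hr hc' n
    have hcodd : Odd c := by
      obtain ⟨m', -, h⟩ := hc'
      rw [h]
      exact odd_one.add_even (((even_two).pow_of_ne_zero (by omega)).mul_right _)
    obtain ⟨t, ht⟩ := hzb.symm.dvd
    have hw : Odd (u * c ^ z * m) := (hu.mul hcodd.pow).mul hm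
    have hP : (2 : ℤ) ^ (r + n) ≠ 0 := by positivity
    -- The digit `0` works exactly when `t` is even, the digit `1` exactly when `t` is odd.
    have h0 : u * c ^ z ≡ b [ZMOD 2 ^ (r + (n + 1))] ↔ Even t := by
      rw [Int.modEq_comm, Int.modEq_iff_dvd, ht, ← add_assoc, pow_succ,
        mul_dvd_mul_iff_left hP, even_iff_two_dvd]
    have h1 : u * c ^ (z + 2 ^ n) ≡ b [ZMOD 2 ^ (r + (n + 1))] ↔ ¬ Even t := by
      have e : u * c ^ (z + 2 ^ n) - b = 2 ^ (r + n) * (t + u * c ^ z * m) := by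
        rw [pow_add, hpow]
        linear_combination ht
      rw [Int.modEq_comm, Int.modEq_iff_dvd, e, ← add_assoc, pow_succ,
        mul_dvd_mul_iff_left hP, ← even_iff_two_dvd, Int.even_add]
      simp [Int.not_even_iff_odd.2 hw]
    -- Any solution for `n + 1` has `z` as its lower `n` digits.
    have hcases : ∀ x : ℕ, x < 2 ^ (n + 1) → u * c ^ x ≡ b [ZMOD 2 ^ (r + (n + 1))] →
        x = z ∨ x = z + 2 ^ n := by
      intro x hx hxb
      have hxb' : u * c ^ x ≡ b [ZMOD 2 ^ (r + n)] :=
        hxb.of_dvd (pow_dvd_pow 2 (by omega))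
      rcases lt_or_ge x (2 ^ n) with hlt | hge
      · exact Or.inl (huniq x ⟨hlt, hxb'⟩)
      · obtain ⟨w, rfl⟩ := Nat.exists_eq_add_of_le hge
        have hone : c ^ 2 ^ n ≡ 1 [ZMOD 2 ^ (r + n)] := by
          rw [hpow, Int.modEq_comm, Int.modEq_iff_dvd]
          exact ⟨m, by ring⟩
        have hwb : u * c ^ w ≡ b [ZMOD 2 ^ (r + n)] := by
          refine Int.ModEq.trans ?_ hxb'
          rw [pow_add c]
          simpa using ((hone.symm.mul_right (c ^ w)).mul_left u)
        have := huniq w ⟨by rw [pow_succ] at hx; omega, hwb⟩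
        omega
    by_cases hte : Even t
    · refine ⟨z, ⟨by rw [pow_succ]; omega, h0.2 hte⟩, ?_⟩
      rintro x ⟨hx, hxb⟩
      rcases hcases x hx hxb with rfl | rfl
      · rfl
      · exact absurd hte (h1.1 hxb)
    · refine ⟨z + 2 ^ n, ⟨by rw [pow_succ]; omega, h1.2 hte⟩, ?_⟩
      rintro x ⟨hx, hxb⟩
      rcases hcases x hx hxb with rfl | rfl
      · exact absurd (h0.1 hxb) hte
      · rfl

/-- Let a and b be odd integers, k ≥ 1, and r a positive integer with r ≤ k,
2^r ∣ a² − 1, and either r = k or 2^(r+1) ∤ a² − 1. Let y₀ ∈ {0, 1} with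
a^(y₀) ≡ b (mod 2^r). Then there exists exactly one natural number y with
y < 2^(k−r+1) and y ≡ y₀ (mod 2) such that a^y ≡ b (mod 2^k). -/
theorem lift_exists_unique_two (a b : ℤ) (ha : Odd a) (hb : Odd b)
    (k : ℕ) (hk : 1 ≤ k) (r : ℕ) (hr : 0 < r) (hrk : r ≤ k)
    (hdvd : (2 : ℤ) ^ r ∣ a ^ 2 - 1)
    (hmin : r = k ∨ ¬ (2 : ℤ) ^ (r + 1) ∣ a ^ 2 - 1)
    (y₀ : ℕ) (hy₀ : y₀ = 0 ∨ y₀ = 1)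
    (hy₀b : a ^ y₀ ≡ b [ZMOD (2 : ℤ) ^ r]) :
    ∃! y : ℕ, y < 2 ^ (k - r + 1) ∧ y ≡ y₀ [MOD 2] ∧
      a ^ y ≡ b [ZMOD (2 : ℤ) ^ k] := by
  obtain ⟨n, rfl⟩ := Nat.exists_eq_add_of_le hrk
  have hc : n ≠ 0 → 2 ≤ r ∧ ∃ m, Odd m ∧ a ^ 2 = 1 + 2 ^ r * m := by
    intro hn
    have hnd : ¬ (2 : ℤ) ^ (r + 1) ∣ a ^ 2 - 1 := hmin.resolve_left (by omega)
    refine ⟨?_, ?_⟩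
    · by_contra hlt
      have h8 : (8 : ℤ) ∣ a ^ 2 - 1 := Int.eight_dvd_sq_sub_one_of_odd ha
      exact hnd ((pow_dvd_pow 2 (by omega : r + 1 ≤ 3)).trans (by simpa using h8))
    · obtain ⟨m, hm⟩ := hdvd
      refine ⟨m, ?_, by linear_combination hm⟩
      rw [← Int.not_even_iff_odd]
      rintro he
      rw [hm, pow_succ] at hnd
      exact hnd (mul_dvd_mul_left _ he.two_dvd)
  obtain ⟨z, ⟨hz, hzb⟩, huniq⟩ :=
    existsUnique_mul_pow_modEq (a ^ 2) (a ^ y₀) b ha.pow r hy₀b n hc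
  have hexp : ∀ x : ℕ, a ^ (y₀ + 2 * x) = a ^ y₀ * (a ^ 2) ^ x := fun x => by
    rw [pow_add, pow_mul]
  rw [Nat.add_sub_cancel_left]
  refine ⟨y₀ + 2 * z, ⟨by rw [pow_succ]; omega, by simp [Nat.ModEq], by rwa [hexp]⟩, ?_⟩
  rintro y ⟨hy, hpar, hyb⟩
  obtain ⟨x, rfl⟩ : ∃ x, y = y₀ + 2 * x := ⟨y / 2, by unfold Nat.ModEq at hpar; omega⟩
  rw [hexp] at hyb
  rw [huniq x ⟨by rw [pow_succ] at hy; omega, hyb⟩]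
end

section
/- Let p be an odd prime, k ≥ 1, and a, b, z integers with p ∤ a, 0 ≤ z < p − 1, a^z ≡ b (mod p), and suppose the multiplicative order of a modulo p equals p − 1. If y is the smallest natural number such that a^((p−1)y + z) ≡ b (mod p^k), then x = (p−1)y + z is the smallest natural number satisfying a^x ≡ b (mod p^k). -/
/-!
Any solution `x` modulo `p ^ k` is also a solution modulo `p`, so `a ^ x = a ^ z` in `ZMod p`.
As `a` has order `p - 1` there and `z < p - 1`, this forces `x % (p - 1) = z`, that is
`x = (p - 1) * y' + z` with `y' = x / (p - 1)`, and minimality of `y` gives `y ≤ y'`.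
-/

/-- Let p be an odd prime, k ≥ 1, a, b integers and z a natural number with p ∤ a,
0 ≤ z < p − 1, a^z ≡ b (mod p), and ord_p(a) = p − 1. If y is the smallest natural
number such that a^((p−1)y + z) ≡ b (mod p^k), then x = (p−1)y + z is the smallest
natural number satisfying a^x ≡ b (mod p^k). -/
theorem minimal_solution (p : ℕ) (hp : p.Prime) (hodd : p ≠ 2)
    (k : ℕ) (hk : 1 ≤ k) (a b : ℤ) (z : ℕ) (ha : ¬ (p : ℤ) ∣ a)
    (hzlt : z < p - 1) (hz : a ^ z ≡ b [ZMOD (p : ℤ)])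
    (hord : orderOf ((a : ZMod p)) = p - 1)
    (y : ℕ) (hy : IsLeast {y' : ℕ | a ^ ((p - 1) * y' + z) ≡ b [ZMOD (p : ℤ) ^ k]} y) :
    IsLeast {x : ℕ | a ^ x ≡ b [ZMOD (p : ℤ) ^ k]} ((p - 1) * y + z) := by
  haveI : Fact p.Prime := ⟨hp⟩
  refine ⟨hy.1, fun x hx => ?_⟩
  have hx_modp : a ^ x ≡ b [ZMOD (p : ℤ)] :=
    Int.ModEq.of_dvd (dvd_pow_self (p : ℤ) (by omega)) hx
  have hpow : (a : ZMod p) ^ x = (a : ZMod p) ^ z := by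
    have h := (ZMod.intCast_eq_intCast_iff _ _ _).2 (hx_modp.trans hz.symm)
    exact_mod_cast h
  have hmod : x % (p - 1) = z := by
    rw [← pow_mod_orderOf, hord] at hpow
    refine pow_injOn_Iio_orderOf (x := (a : ZMod p)) ?_ ?_ hpow
    · rw [Set.mem_Iio, hord]
      exact Nat.mod_lt _ (by omega)
    · rwa [Set.mem_Iio, hord]
  have hx_eq : (p - 1) * (x / (p - 1)) + z = x := by
    have h := Nat.div_add_mod x (p - 1)
    rwa [hmod] at h
  have hle : y ≤ x / (p - 1) := hy.2 (by
    rw [Set.mem_setOf_eq, hx_eq]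
    exact hx)
  calc (p - 1) * y + z ≤ (p - 1) * (x / (p - 1)) + z := by gcongr
    _ = x := hx_eq
end
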